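/- Triangle-network witness certificate: on (ℂ^d ⊗ ℂ^d)^{⊗3} with edges labelled 1, 2, 3, define W^Δ = −((d²−1)/2) · Φ_1 ⊗ Φ_2 ⊗ Φ_3 + (1/2) · Σ_{T: ∅ ≠ T ⊊ {1,2,3}} ( ⊗_{e∈T} Φ_e ⊗ ⊗_{e∉T} (I_e − Φ_e) ), and Q = P⁺ ⊗ P⁻ ⊗ Φ + P⁻ ⊗ P⁺ ⊗ Φ. Then 0 ⪯ Q ⪯ I and Q^{Γ_{{1,2}}} ⪯ W^Δ, where Γ_{{1,2}} is the partial transpose of the first ℂ^d factor of edges 1 and 2. -/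

import Mathlib

open Matrix Finset
open scoped ComplexOrder

/-- The projector onto the maximally entangled state on `ℂ^d ⊗ ℂ^d`. -/
noncomputable def phiM (d : ℕ) : Matrix (Fin d × Fin d) (Fin d × Fin d) ℂ :=
  Matrix.of fun p q => if p.1 = p.2 ∧ q.1 = q.2 then (1 : ℂ) / d else 0

/-- The swap operator on `ℂ^d ⊗ ℂ^d`. -/
def swapM (d : ℕ) : Matrix (Fin d × Fin d) (Fin d × Fin d) ℂ :=
  Matrix.of fun p q => if p.1 = q.2 ∧ p.2 = q.1 then (1 : ℂ) else 0

/-- The symmetric projector `P⁺ = (I + V)/2`. -/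
noncomputable def Pplus (d : ℕ) : Matrix (Fin d × Fin d) (Fin d × Fin d) ℂ :=
  (2⁻¹ : ℂ) • (1 + swapM d)

/-- The antisymmetric projector `P⁻ = (I − V)/2`. -/
noncomputable def Pminus (d : ℕ) : Matrix (Fin d × Fin d) (Fin d × Fin d) ℂ :=
  (2⁻¹ : ℂ) • (1 - swapM d)

/-- `P_T = ⊗_{e∈T} Φ_e ⊗ ⊗_{e∉T} (I_e − Φ_e)` on the total space of the network. -/
noncomputable def PT (d : ℕ) (E : Type*) [Fintype E] [DecidableEq E] (T : Finset E) :
    Matrix (E → Fin d × Fin d) (E → Fin d × Fin d) ℂ :=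
  Matrix.of fun x y =>
    ∏ e, if e ∈ T then phiM d (x e) (y e)
         else ((1 : Matrix (Fin d × Fin d) (Fin d × Fin d) ℂ) - phiM d) (x e) (y e)

/-- `Γ_K`: partial transpose of the first `ℂ^d` factor of every edge in `K`. -/
def ptK (d : ℕ) (E : Type*) [DecidableEq E] (K : Finset E)
    (M : Matrix (E → Fin d × Fin d) (E → Fin d × Fin d) ℂ) :
    Matrix (E → Fin d × Fin d) (E → Fin d × Fin d) ℂ :=
  Matrix.of fun x y =>
    M (fun e => if e ∈ K then ((y e).1, (x e).2) else x e)
      (fun e => if e ∈ K then ((x e).1, (y e).2) else y e)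

/-- The triangle-network witness
`W^Δ = −((d²−1)/2)·Φ⊗Φ⊗Φ + (1/2)·Σ_{∅ ≠ T ⊊ {1,2,3}} P_T`. -/
noncomputable def Wtriangle (d : ℕ) :
    Matrix (Fin 3 → Fin d × Fin d) (Fin 3 → Fin d × Fin d) ℂ :=
  (-(((d : ℂ) ^ 2 - 1) / 2)) • Matrix.of (fun x y => ∏ e, phiM d (x e) (y e))
    + (2⁻¹ : ℂ) • ∑ T ∈ Finset.univ.powerset.filter
        (fun T : Finset (Fin 3) => T.Nonempty ∧ T ≠ Finset.univ), PT d (Fin 3) T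

/-- `Q = P⁺ ⊗ P⁻ ⊗ Φ + P⁻ ⊗ P⁺ ⊗ Φ`. -/
noncomputable def Qtriangle (d : ℕ) :
    Matrix (Fin 3 → Fin d × Fin d) (Fin 3 → Fin d × Fin d) ℂ :=
  Matrix.of fun x y =>
    Pplus d (x 0) (y 0) * Pminus d (x 1) (y 1) * phiM d (x 2) (y 2)
      + Pminus d (x 0) (y 0) * Pplus d (x 1) (y 1) * phiM d (x 2) (y 2)

/-!
Write `Ψ = 1 - Φ`. Partial transposition turns the swap `V` into `d Φ`, so the cross terms of
`P⁺ ⊗ P⁻ + P⁻ ⊗ P⁺` cancel and its partial transpose is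
`(1 ⊗ 1 - d² Φ ⊗ Φ) / 2 = ((1 - d²) Φ ⊗ Φ + Φ ⊗ Ψ + Ψ ⊗ Φ + Ψ ⊗ Ψ) / 2`.
Tensoring with `Φ` on the last edge yields exactly the terms of `W^Δ` with `Φ` on that edge, so
`W^Δ - Q^Γ` is half the sum of the projectors `P_T` with `∅ ≠ T ⊆ {0, 1}`. The operator `Q` is
itself a projector, being the sum of two orthogonal ones.
-/

section StarProjection

open scoped MatrixOrder in
theorem posSemidef_of_isStarProjection {𝕜 n : Type*} [RCLike 𝕜] [Fintype n] {M : Matrix n n 𝕜}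
    (hM : IsStarProjection M) : M.PosSemidef :=
  Matrix.nonneg_iff_posSemidef.mp hM.nonneg

theorem isStarProjection_half_smul_one_add {K A : Type*} [Field K] [NeZero (2 : K)] [StarRing K]
    [Ring A] [StarRing A] [Algebra K A] [StarModule K A] {v : A} (hv : IsSelfAdjoint v)
    (hv_sq : v * v = 1) : IsStarProjection ((2⁻¹ : K) • (1 + v)) where
  isIdempotentElem := by
    have hsq : (1 + v) * (1 + v) = (2 : K) • (1 + v) := by
      rw [mul_add, add_mul, add_mul, hv_sq, one_mul, one_mul, mul_one]
      module
    rw [IsIdempotentElem, smul_mul_smul_comm, hsq, smul_smul, inv_mul_cancel_right₀ two_ne_zero]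
  isSelfAdjoint := by
    have hhalf : IsSelfAdjoint (2⁻¹ : K) := (IsSelfAdjoint.ofNat 2).inv₀
    exact hhalf.smul ((IsSelfAdjoint.one A).add hv)

end StarProjection

section PiKronecker

variable {ι R : Type*} [Fintype ι] {l m n : ι → Type*}

/-- The Kronecker product `⨂ i, A i` of a finite family of matrices, with rows and columns indexed
by dependent functions so that no order on the factors has to be chosen. -/
def piKronecker [CommMonoid R] (A : ∀ i, Matrix (m i) (n i) R) :
    Matrix (∀ i, m i) (∀ i, n i) R :=
  Matrix.of fun x y => ∏ i, A i (x i) (y i)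

theorem piKronecker_apply [CommMonoid R] (A : ∀ i, Matrix (m i) (n i) R) (x : ∀ i, m i)
    (y : ∀ i, n i) : piKronecker A x y = ∏ i, A i (x i) (y i) :=
  rfl

theorem piKronecker_vec_three_apply {m n : Type*} [CommMonoid R] (A B C : Matrix m n R)
    (x : Fin 3 → m) (y : Fin 3 → n) :
    piKronecker ![A, B, C] x y = A (x 0) (y 0) * B (x 1) (y 1) * C (x 2) (y 2) := by
  rw [piKronecker_apply, Fin.prod_univ_three]
  rfl

theorem piKronecker_mul [DecidableEq ι] [CommSemiring R] [∀ i, Fintype (m i)]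
    (A : ∀ i, Matrix (l i) (m i) R) (B : ∀ i, Matrix (m i) (n i) R) :
    piKronecker A * piKronecker B = piKronecker fun i => A i * B i := by
  ext x y
  simp only [piKronecker_apply, Matrix.mul_apply, ← Finset.prod_mul_distrib,
    Finset.prod_univ_sum, Fintype.piFinset_univ]

theorem conjTranspose_piKronecker [CommSemiring R] [StarRing R] (A : ∀ i, Matrix (m i) (n i) R) :
    (piKronecker A)ᴴ = piKronecker fun i => (A i)ᴴ := by
  ext x y
  simp only [piKronecker_apply, Matrix.conjTranspose_apply, star_prod]

theorem piKronecker_eq_zero [CommSemiring R] {A : ∀ i, Matrix (m i) (n i) R} {i : ι}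
    (hA : A i = 0) : piKronecker A = 0 := by
  ext x y
  exact Finset.prod_eq_zero (Finset.mem_univ i) (by rw [hA, Matrix.zero_apply])

theorem isStarProjection_piKronecker [DecidableEq ι] [CommSemiring R] [StarRing R]
    [∀ i, Fintype (n i)] {A : ∀ i, Matrix (n i) (n i) R} (hA : ∀ i, IsStarProjection (A i)) :
    IsStarProjection (piKronecker A) where
  isIdempotentElem := by
    rw [IsIdempotentElem, piKronecker_mul]
    exact congrArg piKronecker (funext fun i => (hA i).isIdempotentElem)
  isSelfAdjoint := by
    rw [IsSelfAdjoint, Matrix.star_eq_conjTranspose, conjTranspose_piKronecker]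
    exact congrArg piKronecker (funext fun i => (hA i).isSelfAdjoint)

end PiKronecker

section PartialTranspose

/-- The partial transpose `M ↦ M^Γ` on the first tensor factor, as a linear map on matrices. -/
def partialTranspose (R m n : Type*) [Semiring R] :
    Matrix (m × n) (m × n) R →ₗ[R] Matrix (m × n) (m × n) R where
  toFun M := Matrix.of fun p q => M (q.1, p.2) (p.1, q.2)
  map_add' _ _ := rfl
  map_smul' _ _ := rfl

theorem partialTranspose_apply {R m n : Type*} [Semiring R] (M : Matrix (m × n) (m × n) R)
    (p q : m × n) : partialTranspose R m n M p q = M (q.1, p.2) (p.1, q.2) :=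
  rfl

theorem partialTranspose_one (R m n : Type*) [Semiring R] [DecidableEq m] [DecidableEq n] :
    partialTranspose R m n 1 = 1 := by
  ext p q
  simp only [partialTranspose_apply, Matrix.one_apply, Prod.ext_iff, eq_comm]

theorem ptK_piKronecker {E : Type*} [Fintype E] [DecidableEq E] {d : ℕ} (K : Finset E)
    (A : E → Matrix (Fin d × Fin d) (Fin d × Fin d) ℂ) :
    ptK d E K (piKronecker A) =
      piKronecker fun e => if e ∈ K then partialTranspose ℂ (Fin d) (Fin d) (A e) else A e := by
  ext x y
  simp only [ptK, Matrix.of_apply, piKronecker_apply]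
  refine Finset.prod_congr rfl fun e _ => ?_
  split_ifs <;> rfl

theorem ptK_zero_one_piKronecker_vec_three {d : ℕ}
    (A B C : Matrix (Fin d × Fin d) (Fin d × Fin d) ℂ) :
    ptK d (Fin 3) {0, 1} (piKronecker ![A, B, C]) =
      piKronecker ![partialTranspose ℂ (Fin d) (Fin d) A,
        partialTranspose ℂ (Fin d) (Fin d) B, C] := by
  rw [ptK_piKronecker]
  congr 1
  funext e
  fin_cases e <;> rfl

theorem ptK_add {E : Type*} [DecidableEq E] {d : ℕ} (K : Finset E)
    (M N : Matrix (E → Fin d × Fin d) (E → Fin d × Fin d) ℂ) :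
    ptK d E K (M + N) = ptK d E K M + ptK d E K N :=
  rfl

end PartialTranspose

section EdgeOperators

variable (d : ℕ)

theorem isStarProjection_phiM : IsStarProjection (phiM d) where
  isIdempotentElem := by
    ext p q
    have hd : (d : ℂ) ≠ 0 := Nat.cast_ne_zero.mpr p.1.pos.ne'
    by_cases hp : p.1 = p.2 <;> by_cases hq : q.1 = q.2 <;>
      simp [phiM, Matrix.mul_apply, Fintype.sum_prod_type, hp, hq, hd]
  isSelfAdjoint := by
    ext p q
    simp only [phiM, Matrix.star_apply, Matrix.of_apply, and_comm]
    split_ifs <;> simp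

theorem isSelfAdjoint_swapM : IsSelfAdjoint (swapM d) := by
  ext p q
  simp only [swapM, Matrix.star_apply, Matrix.of_apply, and_comm, eq_comm]
  split_ifs <;> simp

theorem swapM_mul_swapM : swapM d * swapM d = 1 := by
  ext p q
  simp [swapM, Matrix.mul_apply, Matrix.one_apply, Fintype.sum_prod_type, ite_and, Prod.ext_iff]

theorem isStarProjection_Pplus : IsStarProjection (Pplus d) :=
  isStarProjection_half_smul_one_add (isSelfAdjoint_swapM d) (swapM_mul_swapM d)

theorem Pminus_eq_one_sub_Pplus : Pminus d = 1 - Pplus d := by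
  rw [Pminus, Pplus]
  module

theorem isStarProjection_Pminus : IsStarProjection (Pminus d) :=
  Pminus_eq_one_sub_Pplus d ▸ (isStarProjection_Pplus d).one_sub

theorem Pplus_mul_Pminus : Pplus d * Pminus d = 0 :=
  Pminus_eq_one_sub_Pplus d ▸ (isStarProjection_Pplus d).mul_one_sub_self

theorem partialTranspose_swapM :
    partialTranspose ℂ (Fin d) (Fin d) (swapM d) = (d : ℂ) • phiM d := by
  ext p q
  have hd : (d : ℂ) ≠ 0 := Nat.cast_ne_zero.mpr p.1.pos.ne'
  simp [partialTranspose_apply, swapM, phiM, hd, and_comm, eq_comm]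

theorem partialTranspose_Pplus :
    partialTranspose ℂ (Fin d) (Fin d) (Pplus d) = (2⁻¹ : ℂ) • (1 + (d : ℂ) • phiM d) := by
  rw [Pplus, map_smul, map_add, partialTranspose_one, partialTranspose_swapM]

theorem partialTranspose_Pminus :
    partialTranspose ℂ (Fin d) (Fin d) (Pminus d) = (2⁻¹ : ℂ) • (1 - (d : ℂ) • phiM d) := by
  rw [Pminus, map_smul, map_sub, partialTranspose_one, partialTranspose_swapM]

end EdgeOperators

section NetworkOperators

variable (d : ℕ)

theorem PT_eq_piKronecker {E : Type*} [Fintype E] [DecidableEq E] (T : Finset E) :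
    PT d E T = piKronecker fun e => if e ∈ T then phiM d else 1 - phiM d := by
  ext x y
  simp only [PT, piKronecker_apply, Matrix.of_apply]
  refine Finset.prod_congr rfl fun e _ => ?_
  split_ifs <;> rfl

theorem posSemidef_PT {E : Type*} [Fintype E] [DecidableEq E] (T : Finset E) :
    (PT d E T).PosSemidef := by
  rw [PT_eq_piKronecker]
  refine posSemidef_of_isStarProjection (isStarProjection_piKronecker fun e => ?_)
  split_ifs
  · exact isStarProjection_phiM d
  · exact (isStarProjection_phiM d).one_sub

theorem Qtriangle_eq_piKronecker_add :
    Qtriangle d =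
      piKronecker ![Pplus d, Pminus d, phiM d] + piKronecker ![Pminus d, Pplus d, phiM d] := by
  ext x y
  simp only [Qtriangle, Matrix.of_apply, Matrix.add_apply, piKronecker_vec_three_apply]

theorem isStarProjection_Qtriangle : IsStarProjection (Qtriangle d) := by
  have hplus := isStarProjection_Pplus d
  have hminus := isStarProjection_Pminus d
  have hphi := isStarProjection_phiM d
  rw [Qtriangle_eq_piKronecker_add]
  refine IsStarProjection.add (isStarProjection_piKronecker ?_) (isStarProjection_piKronecker ?_) ?_
  · simpa [Fin.forall_fin_succ] using ⟨hplus, hminus, hphi⟩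
  · simpa [Fin.forall_fin_succ] using ⟨hminus, hplus, hphi⟩
  · rw [piKronecker_mul]
    exact piKronecker_eq_zero (i := 0) (Pplus_mul_Pminus d)

theorem ptK_Qtriangle :
    ptK d (Fin 3) {0, 1} (Qtriangle d) =
      (-(((d : ℂ) ^ 2 - 1) / 2)) • PT d (Fin 3) Finset.univ +
        (2⁻¹ : ℂ) • (PT d (Fin 3) {2} + PT d (Fin 3) {0, 2} + PT d (Fin 3) {1, 2}) := by
  rw [Qtriangle_eq_piKronecker_add, ptK_add, ptK_zero_one_piKronecker_vec_three,
    ptK_zero_one_piKronecker_vec_three, partialTranspose_Pplus, partialTranspose_Pminus]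
  ext x y
  simp only [PT, piKronecker_vec_three_apply, Fin.prod_univ_three, Matrix.of_apply,
    Matrix.add_apply, Matrix.sub_apply, Matrix.smul_apply, smul_eq_mul, Finset.mem_insert,
    Finset.mem_singleton, Finset.mem_univ, Fin.reduceEq, zero_ne_one, one_ne_zero, or_false,
    or_true, or_self, if_true, if_false]
  ring

theorem Wtriangle_eq_sum_PT :
    Wtriangle d =
      (-(((d : ℂ) ^ 2 - 1) / 2)) • PT d (Fin 3) Finset.univ +
        (2⁻¹ : ℂ) • (PT d (Fin 3) {0} + PT d (Fin 3) {1} + PT d (Fin 3) {2} +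
          PT d (Fin 3) {0, 1} + PT d (Fin 3) {0, 2} + PT d (Fin 3) {1, 2}) := by
  have hproper : Finset.univ.powerset.filter
      (fun T : Finset (Fin 3) => T.Nonempty ∧ T ≠ Finset.univ) =
        {{0}, {1}, {2}, {0, 1}, {0, 2}, {1, 2}} := by decide
  have hphi : Matrix.of (fun x y => ∏ e, phiM d (x e) (y e)) = PT d (Fin 3) Finset.univ := by
    simp only [PT, Finset.mem_univ, if_true]
  rw [Wtriangle, hproper, hphi]
  repeat rw [Finset.sum_insert (by decide)]
  rw [Finset.sum_singleton]
  simp only [add_assoc]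

theorem Wtriangle_sub_ptK_Qtriangle :
    Wtriangle d - ptK d (Fin 3) {0, 1} (Qtriangle d) =
      (2⁻¹ : ℂ) • (PT d (Fin 3) {0} + PT d (Fin 3) {1} + PT d (Fin 3) {0, 1}) := by
  rw [Wtriangle_eq_sum_PT, ptK_Qtriangle]
  module

end NetworkOperators

/-- Triangle-network witness certificate: `0 ⪯ Q ⪯ I` and
`Q^{Γ_{{1,2}}} ⪯ W^Δ`. -/
theorem stmt_16 (d : ℕ) (hd : 2 ≤ d) :
    (Qtriangle d).PosSemidef ∧ (1 - Qtriangle d).PosSemidef ∧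
    (Wtriangle d - ptK d (Fin 3) ({0, 1} : Finset (Fin 3)) (Qtriangle d)).PosSemidef := by
  have hQ := isStarProjection_Qtriangle d
  refine ⟨posSemidef_of_isStarProjection hQ, posSemidef_of_isStarProjection hQ.one_sub, ?_⟩
  rw [Wtriangle_sub_ptK_Qtriangle]
  have hsum := ((posSemidef_PT d {0}).add (posSemidef_PT d {1})).add
    (posSemidef_PT d ({0, 1} : Finset (Fin 3)))
  exact hsum.smul (by positivity)
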